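/- There exists a constant C > 0, depending only on L, η, β, κ, τ, m, δ and p (and independent of λ), such that every solution (u, w, θ, q) of the resolvent system with data (f₁, f₂, f₃, f₄) which additionally satisfies ∫₀ᴸ θ(x) dx = 0 obeys ∫₀ᴸ |θ(x)|² dx ≤ C ‖F‖ ‖U‖. -/

import Mathlib

open MeasureTheory Set intervalIntegral Complex

noncomputable section

/-- A (smooth) solution of the resolvent system `(iλ − 𝒜)U = F` with clamped/zero-flux
boundary conditions: the four ODEs on `(0, L)` together with
`u(0) = u(L) = 0`, `w(0) = w(L) = 0`, `q(0) = q(L) = 0`. -/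
def ResolventSol (L η β κ τ : ℝ) (m δ p : ℝ → ℝ) (lam : ℝ)
    (f₁ f₂ f₃ f₄ u w θ q : ℝ → ℂ) : Prop :=
  ContDiff ℝ (⊤ : ℕ∞) u ∧ ContDiff ℝ (⊤ : ℕ∞) w ∧ ContDiff ℝ (⊤ : ℕ∞) θ ∧ ContDiff ℝ (⊤ : ℕ∞) q ∧
  ContDiff ℝ (⊤ : ℕ∞) f₁ ∧ ContDiff ℝ (⊤ : ℕ∞) f₂ ∧ ContDiff ℝ (⊤ : ℕ∞) f₃ ∧ ContDiff ℝ (⊤ : ℕ∞) f₄ ∧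
  (∀ x ∈ Ioo (0 : ℝ) L,
    (Complex.I * (lam : ℂ) * u x - w x = f₁ x) ∧
    (Complex.I * (lam : ℂ) * (m x : ℂ) * w x
        - deriv (fun y => (p y : ℂ) * deriv u y + 2 * (δ y : ℂ) * deriv w y) x
        + (η : ℂ) * deriv θ x = (m x : ℂ) * f₂ x) ∧
    (Complex.I * (lam : ℂ) * θ x
        + deriv (fun y => (κ : ℂ) * q y + (η : ℂ) * w y) x = f₃ x) ∧
    (Complex.I * (lam : ℂ) * (τ : ℂ) * q x + (κ : ℂ) * deriv θ x + (β : ℂ) * q x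
        = (τ : ℂ) * f₄ x)) ∧
  u 0 = 0 ∧ u L = 0 ∧ w 0 = 0 ∧ w L = 0 ∧ q 0 = 0 ∧ q L = 0

/-- Squared phase-space norm of `U = (u, w, θ, q)`. -/
def normUsq (L τ : ℝ) (m p : ℝ → ℝ) (u w θ q : ℝ → ℂ) : ℝ :=
  (∫ x in (0 : ℝ)..L, p x * ‖deriv u x‖ ^ 2) + (∫ x in (0 : ℝ)..L, m x * ‖w x‖ ^ 2)
    + (∫ x in (0 : ℝ)..L, ‖θ x‖ ^ 2) + τ * ∫ x in (0 : ℝ)..L, ‖q x‖ ^ 2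

/-- Squared phase-space norm of the data `F = (f₁, f₂, f₃, f₄)`. -/
def normFsq (L τ : ℝ) (m p : ℝ → ℝ) (f₁ f₂ f₃ f₄ : ℝ → ℂ) : ℝ :=
  (∫ x in (0 : ℝ)..L, p x * ‖deriv f₁ x‖ ^ 2) + (∫ x in (0 : ℝ)..L, m x * ‖f₂ x‖ ^ 2)
    + (∫ x in (0 : ℝ)..L, ‖f₃ x‖ ^ 2) + τ * ∫ x in (0 : ℝ)..L, ‖f₄ x‖ ^ 2

/-!
Testing the system against `U` gives an energy identity that controls the dissipation:
`2 ∫ δ |w'|² + β ∫ |q|² ≤ ‖F‖ ‖U‖`. To reach `θ`, test the heat-flux equation against the primitive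
`Φ(x) = ∫₀ˣ θ`. Since `θ` has mean zero, `Φ` vanishes at both ends and the term `κ ⟪θ', Φ⟫`
integrates to `-κ ∫ |θ|²`. The remaining term `iλτ ⟪q, Φ⟫` is freed of `λ` by the integrated
temperature equation `iλ Φ + κ q + η w = ∫₀ˣ f₃`. Every term left is a product of `θ`, `q`, `w` and
the data, so the Cauchy–Schwarz, Poincaré and Young inequalities absorb `θ` and leave only
dissipation and `‖F‖ ‖U‖`.
-/

section L2

variable {E F : Type*} [NormedAddCommGroup E] [NormedAddCommGroup F] {a b : ℝ}

/-- The `L²` norm of `f` on `[a, b]`, written as an interval integral; it is only meaningful for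
`a ≤ b` and square-integrable `f`. -/
def l2Norm (a b : ℝ) (f : ℝ → E) : ℝ :=
  √(∫ x in a..b, ‖f x‖ ^ 2)

lemma l2Norm_nonneg (a b : ℝ) (f : ℝ → E) : 0 ≤ l2Norm a b f :=
  Real.sqrt_nonneg _

lemma sq_l2Norm (hab : a ≤ b) (f : ℝ → E) : l2Norm a b f ^ 2 = ∫ x in a..b, ‖f x‖ ^ 2 :=
  Real.sq_sqrt (integral_nonneg hab fun _ _ ↦ by positivity)

lemma l2Norm_const (a b : ℝ) (c : E) : l2Norm a b (fun _ ↦ c) = √(b - a) * ‖c‖ := by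
  simp [l2Norm]

lemma l2Norm_const_smul [NormedSpace ℝ E] (a b c : ℝ) (f : ℝ → E) :
    l2Norm a b (fun x ↦ c • f x) = |c| * l2Norm a b f := by
  simp [l2Norm, norm_smul, mul_pow, Real.sqrt_mul (sq_nonneg c), Real.sqrt_sq_eq_abs]

lemma l2Norm_le_l2Norm (hab : a ≤ b) {f : ℝ → E} {g : ℝ → F} (hf : ContinuousOn f (Icc a b))
    (hg : ContinuousOn g (Icc a b)) (h : ∀ x ∈ Icc a b, ‖f x‖ ≤ ‖g x‖) :
    l2Norm a b f ≤ l2Norm a b g := by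
  refine Real.sqrt_le_sqrt (integral_mono_on hab ?_ ?_ fun x hx ↦ by gcongr; exact h x hx)
  · exact (hf.norm.pow 2).intervalIntegrable_of_Icc hab
  · exact (hg.norm.pow 2).intervalIntegrable_of_Icc hab

lemma integral_norm_mul_norm_le (hab : a ≤ b) {f : ℝ → E} {g : ℝ → F}
    (hf : ContinuousOn f (Icc a b)) (hg : ContinuousOn g (Icc a b)) :
    ∫ x in a..b, ‖f x‖ * ‖g x‖ ≤ l2Norm a b f * l2Norm a b g := by
  have memLp_two {h : ℝ → ℝ} (hh : ContinuousOn h (Icc a b)) :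
      MemLp h (ENNReal.ofReal 2) (volume.restrict (Ioc a b)) := by
    rw [ENNReal.ofReal_ofNat, memLp_two_iff_integrable_sq
      (hh.integrableOn_Icc.mono_set Ioc_subset_Icc_self).aestronglyMeasurable]
    exact (hh.pow 2).integrableOn_Icc.mono_set Ioc_subset_Icc_self
  have holder := integral_mul_le_Lp_mul_Lq_of_nonneg Real.HolderConjugate.two_two
    (ae_of_all _ fun x ↦ norm_nonneg (f x)) (ae_of_all _ fun x ↦ norm_nonneg (g x))
    (memLp_two hf.norm) (memLp_two hg.norm)
  simpa only [l2Norm, integral_of_le hab, Real.sqrt_eq_rpow, Real.rpow_two] using holder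

lemma abs_integral_inner_le [InnerProductSpace ℝ E] (hab : a ≤ b) {f g : ℝ → E}
    (hf : ContinuousOn f (Icc a b)) (hg : ContinuousOn g (Icc a b)) :
    |∫ x in a..b, inner ℝ (f x) (g x)| ≤ l2Norm a b f * l2Norm a b g :=
  calc |∫ x in a..b, inner ℝ (f x) (g x)|
      ≤ ∫ x in a..b, |inner ℝ (f x) (g x)| := abs_integral_le_integral_abs hab
    _ ≤ ∫ x in a..b, ‖f x‖ * ‖g x‖ := integral_mono_on hab
        ((hf.inner (𝕜 := ℝ) hg).abs.intervalIntegrable_of_Icc hab)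
        ((hf.norm.mul hg.norm).intervalIntegrable_of_Icc hab)
        fun x _ ↦ abs_real_inner_le_norm (f x) (g x)
    _ ≤ l2Norm a b f * l2Norm a b g := integral_norm_mul_norm_le hab hf hg

variable [NormedSpace ℝ E]

lemma norm_integral_le_sqrt_mul_l2Norm {f : ℝ → E} (hf : ContinuousOn f (Icc a b)) {x : ℝ}
    (hx : x ∈ Icc a b) : ‖∫ y in a..x, f y‖ ≤ √(b - a) * l2Norm a b f := by
  have hab : a ≤ b := hx.1.trans hx.2
  calc ‖∫ y in a..x, f y‖ ≤ ∫ y in a..x, ‖f y‖ := norm_integral_le_integral_norm hx.1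
    _ ≤ ∫ y in a..b, ‖f y‖ := integral_mono_interval le_rfl hx.1 hx.2
        (ae_of_all _ fun y ↦ norm_nonneg (f y)) (hf.norm.intervalIntegrable_of_Icc hab)
    _ ≤ l2Norm a b (fun _ ↦ (1 : ℝ)) * l2Norm a b f := by
        simpa using integral_norm_mul_norm_le hab (continuousOn_const (c := (1 : ℝ))) hf
    _ = √(b - a) * l2Norm a b f := by simp [l2Norm_const]

lemma continuousOn_intervalIntegral (hab : a ≤ b) {f : ℝ → E} (hf : ContinuousOn f (Icc a b)) :
    ContinuousOn (fun x ↦ ∫ y in a..x, f y) (Icc a b) := by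
  rw [← uIcc_of_le hab] at hf ⊢
  exact continuousOn_primitive_interval' hf.intervalIntegrable left_mem_uIcc

lemma l2Norm_primitive_le (hab : a ≤ b) {f : ℝ → E} (hf : ContinuousOn f (Icc a b)) :
    l2Norm a b (fun x ↦ ∫ y in a..x, f y) ≤ (b - a) * l2Norm a b f :=
  calc l2Norm a b (fun x ↦ ∫ y in a..x, f y)
      ≤ l2Norm a b (fun _ ↦ √(b - a) * l2Norm a b f) :=
        l2Norm_le_l2Norm hab (continuousOn_intervalIntegral hab hf) continuousOn_const fun x hx ↦
          (norm_integral_le_sqrt_mul_l2Norm hf hx).trans (le_abs_self _)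
    _ = (b - a) * l2Norm a b f := by
        rw [l2Norm_const, Real.norm_of_nonneg (mul_nonneg (Real.sqrt_nonneg _) (l2Norm_nonneg ..)),
          ← mul_assoc, Real.mul_self_sqrt (sub_nonneg.2 hab)]

lemma l2Norm_le_mul_l2Norm_deriv [CompleteSpace E] (hab : a ≤ b) {f : ℝ → E} (hf : ContDiff ℝ 1 f)
    (ha : f a = 0) : l2Norm a b f ≤ (b - a) * l2Norm a b (deriv f) := by
  have hf' : Continuous (deriv f) := hf.continuous_deriv le_rfl
  have primitive_deriv (x : ℝ) : ∫ y in a..x, deriv f y = f x := by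
    rw [integral_deriv_eq_sub (fun y _ ↦ hf.differentiable one_ne_zero y)
      (hf'.intervalIntegrable a x), ha, sub_zero]
  simpa only [primitive_deriv] using l2Norm_primitive_le hab hf'.continuousOn

end L2

lemma integral_inner_deriv_primitive {E : Type*} [NormedAddCommGroup E] [InnerProductSpace ℝ E]
    [CompleteSpace E] {a b : ℝ} {f : ℝ → E} (hf : ContDiff ℝ 1 f) (hmean : ∫ x in a..b, f x = 0) :
    ∫ x in a..b, inner ℝ (deriv f x) (∫ y in a..x, f y) = -∫ x in a..b, ‖f x‖ ^ 2 := by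
  have hf' : Continuous (deriv f) := hf.continuous_deriv le_rfl
  have hasDerivAt_primitive (x : ℝ) : HasDerivAt (fun x ↦ ∫ y in a..x, f y) (f x) x :=
    (hf.continuous.integral_hasStrictDerivAt a x).hasDerivAt
  have continuous_primitive : Continuous (fun x ↦ ∫ y in a..x, f y) :=
    continuous_iff_continuousAt.2 fun x ↦ (hasDerivAt_primitive x).continuousAt
  have integrable_sq := (hf.continuous.norm.fun_pow 2).intervalIntegrable (μ := volume) a b
  have integrable_inner :=
    (hf'.inner (𝕜 := ℝ) continuous_primitive).intervalIntegrable (μ := volume) a b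
  have ftc := integral_eq_sub_of_hasDerivAt (a := a) (b := b)
    (fun x _ ↦ ((hf.differentiable one_ne_zero x).hasDerivAt.inner ℝ (hasDerivAt_primitive x)))
    (by simpa only [real_inner_self_eq_norm_sq] using integrable_sq.add integrable_inner)
  simp only [real_inner_self_eq_norm_sq, hmean, integral_same, inner_zero_right, sub_self] at ftc
  rw [integral_add integrable_sq integrable_inner] at ftc
  linarith

lemma integral_eq_sub_of_ae_hasDerivAt {a b : ℝ} (hab : a ≤ b) {f f' : ℝ → ℝ}
    (hf : AbsolutelyContinuousOnInterval f a b)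
    (hderiv : ∀ᵐ x, x ∈ Ioo a b → HasDerivAt f (f' x) x) :
    ∫ x in a..b, f' x = f b - f a := by
  rw [← hf.integral_deriv_eq_sub]
  refine integral_congr_ae ?_
  filter_upwards [hderiv, Measure.ae_ne volume b] with x hx hxb hxI
  rw [uIoc_of_le hab] at hxI
  exact (hx ⟨hxI.1, hxI.2.lt_of_ne hxb⟩).deriv.symm

lemma sq_le_mul_of_mul_sq_le {k μ ν a b c d T Q W X : ℝ} (hk : 0 < k) (hμ : 0 < μ) (hν : 0 < ν)
    (hc : 0 ≤ c) (hd : 0 ≤ d) (hT : k * T ^ 2 ≤ a * X + b * (Q * T) + c * Q ^ 2 + d * (Q * W))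
    (hQ : μ * Q ^ 2 ≤ X) (hW : ν * W ^ 2 ≤ X) :
    T ^ 2 ≤ 2 / k * (a + b ^ 2 / (2 * k) / μ + c / μ + d / 2 * (1 / μ + 1 / ν)) * X := by
  have young_QT : b * (Q * T) ≤ b ^ 2 / (2 * k) * Q ^ 2 + k / 2 * T ^ 2 := by
    have : b ^ 2 / (2 * k) * Q ^ 2 + k / 2 * T ^ 2 - b * (Q * T) =
        (b * Q - k * T) ^ 2 / (2 * k) := by
      field_simp
      ring
    linarith [show 0 ≤ (b * Q - k * T) ^ 2 / (2 * k) by positivity]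
  have young_QW : d * (Q * W) ≤ d / 2 * (Q ^ 2 + W ^ 2) := by
    linarith [mul_le_mul_of_nonneg_left (two_mul_le_add_sq Q W) hd]
  have hQ' : Q ^ 2 ≤ 1 / μ * X := by rwa [one_div, le_inv_mul_iff₀ hμ]
  have hW' : W ^ 2 ≤ 1 / ν * X := by rwa [one_div, le_inv_mul_iff₀ hν]
  have absorbed : k / 2 * T ^ 2 ≤
      (a + b ^ 2 / (2 * k) / μ + c / μ + d / 2 * (1 / μ + 1 / ν)) * X :=
    calc k / 2 * T ^ 2
        ≤ a * X + (b ^ 2 / (2 * k) + c + d / 2) * Q ^ 2 + d / 2 * W ^ 2 := by linarith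
      _ ≤ a * X + (b ^ 2 / (2 * k) + c + d / 2) * (1 / μ * X) + d / 2 * (1 / ν * X) := by gcongr
      _ = _ := by ring
  calc T ^ 2 = 2 / k * (k / 2 * T ^ 2) := by field_simp
    _ ≤ _ := by rw [mul_assoc]; gcongr

section PhaseSpace

variable {L τ : ℝ} {m p : ℝ → ℝ} {u w θ q : ℝ → ℂ}

/-- The pointwise phase vector of `(u, w, θ, q)`, weighted so that its `L²` norm on `[0, L]` is the
phase-space norm `√(normUsq L τ m p u w θ q)`. Applied to the data `(f₁, f₂, f₃, f₄)` it likewise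
gives `√(normFsq L τ m p f₁ f₂ f₃ f₄)`. -/
def phaseVector (τ : ℝ) (m p : ℝ → ℝ) (u w θ q : ℝ → ℂ) (x : ℝ) : EuclideanSpace ℂ (Fin 4) :=
  !₂[√(p x) • deriv u x, √(m x) • w x, θ x, √τ • q x]

lemma inner_phaseVector (hτ : 0 ≤ τ) {f₁ f₂ f₃ f₄ : ℝ → ℂ} {x : ℝ} (hm : 0 ≤ m x)
    (hp : 0 ≤ p x) :
    inner ℝ (phaseVector τ m p f₁ f₂ f₃ f₄ x) (phaseVector τ m p u w θ q x) =
      p x * inner ℝ (deriv f₁ x) (deriv u x) + m x * inner ℝ (f₂ x) (w x)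
        + inner ℝ (f₃ x) (θ x) + τ * inner ℝ (f₄ x) (q x) := by
  simp only [phaseVector, PiLp.inner_apply, Fin.sum_univ_four,
    Matrix.cons_val, real_inner_smul_left, real_inner_smul_right, ← mul_assoc,
    Real.mul_self_sqrt hτ, Real.mul_self_sqrt hm, Real.mul_self_sqrt hp]

lemma norm_phaseVector_sq (hτ : 0 ≤ τ) {x : ℝ} (hm : 0 ≤ m x) (hp : 0 ≤ p x) :
    ‖phaseVector τ m p u w θ q x‖ ^ 2 =
      p x * ‖deriv u x‖ ^ 2 + m x * ‖w x‖ ^ 2 + ‖θ x‖ ^ 2 + τ * ‖q x‖ ^ 2 := by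
  simp only [← real_inner_self_eq_norm_sq, inner_phaseVector hτ hm hp]

variable (hm : ContinuousOn m (Icc 0 L)) (hp : ContinuousOn p (Icc 0 L)) (hu : ContDiff ℝ 1 u)
  (hw : Continuous w) (hθ : Continuous θ) (hq : Continuous q)

include hm hp hu hw hθ hq

lemma continuousOn_phaseVector : ContinuousOn (phaseVector τ m p u w θ q) (Icc 0 L) := by
  have hu' : Continuous (deriv u) := hu.continuous_deriv le_rfl
  refine (PiLp.continuous_toLp 2 _).comp_continuousOn (continuousOn_pi.2 fun i ↦ ?_)
  fin_cases i
  · exact hp.sqrt.smul hu'.continuousOn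
  · exact hm.sqrt.smul hw.continuousOn
  · exact hθ.continuousOn
  · exact (hq.const_smul √τ).continuousOn

variable (hL : 0 ≤ L) (hτ : 0 ≤ τ) (hm₀ : ∀ x ∈ Icc 0 L, 0 ≤ m x) (hp₀ : ∀ x ∈ Icc 0 L, 0 ≤ p x)

include hL hτ hm₀ hp₀

lemma l2Norm_phaseVector :
    l2Norm 0 L (phaseVector τ m p u w θ q) = √(normUsq L τ m p u w θ q) := by
  have hu' : Continuous (deriv u) := hu.continuous_deriv le_rfl
  have integrable {f : ℝ → ℝ} (hf : ContinuousOn f (Icc 0 L)) :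
      IntervalIntegrable f volume 0 L := hf.intervalIntegrable_of_Icc hL
  have integrable_u := integrable (hp.fun_mul (hu'.norm.fun_pow 2).continuousOn)
  have integrable_w := integrable (hm.fun_mul (hw.norm.fun_pow 2).continuousOn)
  have integrable_θ := integrable (hθ.norm.fun_pow 2).continuousOn
  have integrable_q := (integrable (hq.norm.fun_pow 2).continuousOn).const_mul τ
  rw [l2Norm, normUsq, ← intervalIntegral.integral_const_mul,
    ← integral_add integrable_u integrable_w,
    ← integral_add (integrable_u.add integrable_w) integrable_θ,
    ← integral_add ((integrable_u.add integrable_w).add integrable_θ) integrable_q]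
  congr 1
  refine integral_congr fun x hx ↦ ?_
  rw [uIcc_of_le hL] at hx
  exact norm_phaseVector_sq hτ (hm₀ x hx) (hp₀ x hx)

lemma l2Norm_le_sqrt_normUsq : l2Norm 0 L θ ≤ √(normUsq L τ m p u w θ q) := by
  rw [← l2Norm_phaseVector hm hp hu hw hθ hq hL hτ hm₀ hp₀]
  refine l2Norm_le_l2Norm hL hθ.continuousOn (continuousOn_phaseVector hm hp hu hw hθ hq) ?_
  exact fun x _ ↦ PiLp.norm_apply_le (phaseVector τ m p u w θ q x) 2

lemma sqrt_mul_l2Norm_le_sqrt_normUsq : √τ * l2Norm 0 L q ≤ √(normUsq L τ m p u w θ q) := by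
  rw [← l2Norm_phaseVector hm hp hu hw hθ hq hL hτ hm₀ hp₀, ← abs_of_nonneg (Real.sqrt_nonneg τ),
    ← l2Norm_const_smul]
  refine l2Norm_le_l2Norm hL (hq.const_smul _).continuousOn
    (continuousOn_phaseVector hm hp hu hw hθ hq) ?_
  exact fun x _ ↦ PiLp.norm_apply_le (phaseVector τ m p u w θ q x) 3

end PhaseSpace

/-- The flux of energy across `x`: the power `⟪w, p u' + 2 δ w' - η θ⟫` of the total stress minus
the heat power `κ ⟪θ, q⟫`. -/
def energyFlux (η κ : ℝ) (δ p : ℝ → ℝ) (u w θ q : ℝ → ℂ) (x : ℝ) : ℝ :=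
  inner ℝ (w x) ((p x : ℂ) * deriv u x + 2 * (δ x : ℂ) * deriv w x - η * θ x)
    - κ * inner ℝ (θ x) (q x)

lemma absolutelyContinuousOnInterval_energyFlux {a b : ℝ} (η κ : ℝ) {δ p : ℝ → ℝ}
    {u w θ q : ℝ → ℂ} (hδ : AbsolutelyContinuousOnInterval δ a b)
    (hp : AbsolutelyContinuousOnInterval p a b) (hu : ContDiff ℝ 2 u) (hw : ContDiff ℝ 2 w)
    (hθ : ContDiff ℝ 1 θ) (hq : ContDiff ℝ 1 q) :
    AbsolutelyContinuousOnInterval (energyFlux η κ δ p u w θ q) a b := by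
  have inner_absolutelyContinuous {f g : ℝ → ℂ} (hf : ContDiff ℝ 1 f) (hg : ContDiff ℝ 1 g) :
      AbsolutelyContinuousOnInterval (fun x ↦ inner ℝ (f x) (g x)) a b :=
    (hf.inner ℝ hg).contDiffOn.absolutelyContinuousOnInterval
  have hu' : ContDiff ℝ 1 (deriv u) := hu.deriv'
  have hw' : ContDiff ℝ 1 (deriv w) := hw.deriv'
  have hw₁ : ContDiff ℝ 1 w := hw.of_le one_le_two
  have expand : energyFlux η κ δ p u w θ q = fun x ↦
      p x * inner ℝ (w x) (deriv u x) + δ x * (2 * inner ℝ (w x) (deriv w x))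
        + (-η * inner ℝ (w x) (θ x) + -κ * inner ℝ (θ x) (q x)) := by
    ext x
    simp [energyFlux, Complex.inner]
    ring
  rw [expand]
  exact ((hp.fun_mul (inner_absolutelyContinuous hw₁ hu')).fun_add
    (hδ.fun_mul ((inner_absolutelyContinuous hw₁ hw').const_mul 2))).fun_add
      (((inner_absolutelyContinuous hw₁ hθ).const_mul _).fun_add
        ((inner_absolutelyContinuous hθ hq).const_mul _))

namespace ResolventSol

variable {L η β κ τ lam : ℝ} {m δ p : ℝ → ℝ} {f₁ f₂ f₃ f₄ u w θ q : ℝ → ℂ}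

section Equations

variable (h : ResolventSol L η β κ τ m δ p lam f₁ f₂ f₃ f₄ u w θ q) {x : ℝ} (hx : x ∈ Ioo 0 L)

include h hx

lemma deriv_velocity : deriv w x = I * lam * deriv u x - deriv f₁ x := by
  obtain ⟨hu, -, -, -, hf₁, -, -, -, heq, -⟩ := h
  have w_eq : w =ᶠ[nhds x] fun y ↦ I * lam * u y - f₁ y := by
    filter_upwards [isOpen_Ioo.mem_nhds hx] with y hy
    linear_combination -(heq y hy).1
  rw [w_eq.deriv_eq]
  exact (((hu.differentiable (by simp) x).hasDerivAt.const_mul _).sub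
    (hf₁.differentiable (by simp) x).hasDerivAt).deriv

lemma hasDerivAt_stress (hδ : DifferentiableAt ℝ δ x) (hp : DifferentiableAt ℝ p x) :
    HasDerivAt (fun y ↦ (p y : ℂ) * deriv u y + 2 * (δ y : ℂ) * deriv w y)
      (I * lam * m x * w x + η * deriv θ x - m x * f₂ x) x := by
  obtain ⟨hu, hw, -, -, -, -, -, -, heq, -⟩ := h
  have du := (contDiff_infty_iff_deriv.1 hu).2.differentiable (by simp) x
  have dw := (contDiff_infty_iff_deriv.1 hw).2.differentiable (by simp) x
  have hS : DifferentiableAt ℝ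
      (fun y ↦ (p y : ℂ) * deriv u y + 2 * (δ y : ℂ) * deriv w y) x :=
    (hp.hasDerivAt.ofReal_comp.differentiableAt.fun_mul du).fun_add
      ((hδ.hasDerivAt.ofReal_comp.differentiableAt.const_mul 2).fun_mul dw)
  refine hS.hasDerivAt.congr_deriv ?_
  linear_combination -(heq x hx).2.1

lemma temperature_eq : I * lam * θ x + (κ * deriv q x + η * deriv w x) = f₃ x := by
  obtain ⟨-, hw, -, hq, -, -, -, -, heq, -⟩ := h
  rw [← (heq x hx).2.2.1, (((hq.differentiable (by simp) x).hasDerivAt.const_mul _).fun_add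
    ((hw.differentiable (by simp) x).hasDerivAt.const_mul _)).deriv]

lemma hasDerivAt_energyFlux (hδ : DifferentiableAt ℝ δ x) (hp : DifferentiableAt ℝ p x) :
    HasDerivAt (energyFlux η κ δ p u w θ q)
      (2 * (δ x * ‖deriv w x‖ ^ 2) + β * ‖q x‖ ^ 2
        - (p x * inner ℝ (deriv f₁ x) (deriv u x) + m x * inner ℝ (f₂ x) (w x)
          + inner ℝ (f₃ x) (θ x) + τ * inner ℝ (f₄ x) (q x))) x := by
  have velocity := h.deriv_velocity hx
  have stress := h.hasDerivAt_stress hx hδ hp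
  have temperature := h.temperature_eq hx
  obtain ⟨-, hw, hθ, hq, -, -, -, -, heq, -⟩ := h
  have heatFlux := (heq x hx).2.2.2
  have dw := (hw.differentiable (by simp) x).hasDerivAt
  have dθ := (hθ.differentiable (by simp) x).hasDerivAt
  have dq := (hq.differentiable (by simp) x).hasDerivAt
  refine ((dw.inner ℝ (stress.fun_sub (dθ.const_mul (η : ℂ)))).fun_sub
    ((dθ.inner ℝ dq).const_mul κ)).congr_deriv ?_
  simp only [Complex.ext_iff, add_re, sub_re, mul_re, add_im, sub_im, mul_im, I_re, I_im,
    ofReal_re, ofReal_im] at velocity temperature heatFlux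
  simp only [Complex.inner, Complex.sq_norm, normSq_apply, conj_re, conj_im, add_re, sub_re,
    mul_re, add_im, sub_im, mul_im, I_re, I_im, ofReal_re, ofReal_im, re_ofNat, im_ofNat]
  linear_combination p x * (deriv u x).re * velocity.1 + p x * (deriv u x).im * velocity.2
    - (θ x).re * temperature.1 - (θ x).im * temperature.2
    - (q x).re * heatFlux.1 - (q x).im * heatFlux.2

end Equations

section Dissipation

variable (h : ResolventSol L η β κ τ m δ p lam f₁ f₂ f₃ f₄ u w θ q) (hL : 0 ≤ L) (hτ : 0 ≤ τ)
  (hδ : AbsolutelyContinuousOnInterval δ 0 L) (hp : AbsolutelyContinuousOnInterval p 0 L)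
  (hm : ContinuousOn m (Icc 0 L)) (hm₀ : ∀ x ∈ Icc 0 L, 0 ≤ m x) (hp₀ : ∀ x ∈ Icc 0 L, 0 ≤ p x)

include h hL hτ hδ hp hm hm₀ hp₀

lemma integral_dissipation_eq :
    ∫ x in 0..L, (2 * (δ x * ‖deriv w x‖ ^ 2) + β * ‖q x‖ ^ 2) =
      ∫ x in 0..L, inner ℝ (phaseVector τ m p f₁ f₂ f₃ f₄ x) (phaseVector τ m p u w θ q x) := by
  have hderiv : ∀ᵐ x, x ∈ Ioo 0 L → HasDerivAt (energyFlux η κ δ p u w θ q)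
      (2 * (δ x * ‖deriv w x‖ ^ 2) + β * ‖q x‖ ^ 2 -
        inner ℝ (phaseVector τ m p f₁ f₂ f₃ f₄ x) (phaseVector τ m p u w θ q x)) x := by
    filter_upwards [hδ.ae_differentiableAt, hp.ae_differentiableAt] with x hδx hpx hx
    rw [uIcc_of_le hL] at hδx hpx
    have hxI := Ioo_subset_Icc_self hx
    rw [inner_phaseVector hτ (hm₀ x hxI) (hp₀ x hxI)]
    exact h.hasDerivAt_energyFlux hx (hδx hxI) (hpx hxI)
  obtain ⟨hu, hw, hθ, hq, hf₁, hf₂, hf₃, hf₄, -, -, -, hw0, hwL, hq0, hqL⟩ := h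
  have energy_balance := integral_eq_sub_of_ae_hasDerivAt hL
    (absolutelyContinuousOnInterval_energyFlux η κ hδ hp (contDiff_infty.1 hu 2)
      (contDiff_infty.1 hw 2) (hθ.of_le (by simp)) (hq.of_le (by simp))) hderiv
  have hδc : ContinuousOn δ (Icc 0 L) := uIcc_of_le hL ▸ hδ.continuousOn
  have hpc : ContinuousOn p (Icc 0 L) := uIcc_of_le hL ▸ hp.continuousOn
  have hw' : Continuous (deriv w) := hw.continuous_deriv (by simp)
  rw [intervalIntegral.integral_sub] at energy_balance
  · simpa [energyFlux, hw0, hwL, hq0, hqL, sub_eq_zero] using energy_balance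
  · exact (((hδc.fun_mul (hw'.norm.fun_pow 2).continuousOn).const_mul 2).fun_add
      ((hq.continuous.norm.fun_pow 2).continuousOn.const_mul β)).intervalIntegrable_of_Icc hL
  · exact ((continuousOn_phaseVector hm hpc (hf₁.of_le (by simp)) hf₂.continuous hf₃.continuous
      hf₄.continuous).inner (𝕜 := ℝ) (continuousOn_phaseVector hm hpc (hu.of_le (by simp))
      hw.continuous hθ.continuous hq.continuous)).intervalIntegrable_of_Icc hL

lemma dissipation_le {δ₀ : ℝ} (hδ₀ : ∀ x ∈ Icc 0 L, δ₀ ≤ δ x) :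
    2 * δ₀ * l2Norm 0 L (deriv w) ^ 2 + β * l2Norm 0 L q ^ 2 ≤
      √(normFsq L τ m p f₁ f₂ f₃ f₄) * √(normUsq L τ m p u w θ q) := by
  have identity := h.integral_dissipation_eq hL hτ hδ hp hm hm₀ hp₀
  obtain ⟨hu, hw, hθ, hq, hf₁, hf₂, hf₃, hf₄, -⟩ := h
  have hδc : ContinuousOn δ (Icc 0 L) := uIcc_of_le hL ▸ hδ.continuousOn
  have hpc : ContinuousOn p (Icc 0 L) := uIcc_of_le hL ▸ hp.continuousOn
  have hw' : Continuous (deriv w) := hw.continuous_deriv (by simp)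
  have hu₁ : ContDiff ℝ 1 u := hu.of_le (by simp)
  have hf₁' : ContDiff ℝ 1 f₁ := hf₁.of_le (by simp)
  have hQ := (hq.continuous.norm.fun_pow 2).continuousOn (s := Icc 0 L).const_mul β
  have hW := (hw'.norm.fun_pow 2).continuousOn (s := Icc 0 L)
  calc 2 * δ₀ * l2Norm 0 L (deriv w) ^ 2 + β * l2Norm 0 L q ^ 2
      = ∫ x in 0..L, (2 * δ₀ * ‖deriv w x‖ ^ 2 + β * ‖q x‖ ^ 2) := by
        rw [sq_l2Norm hL, sq_l2Norm hL, ← intervalIntegral.integral_const_mul,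
          ← intervalIntegral.integral_const_mul, ← integral_add
            ((hW.const_mul _).intervalIntegrable_of_Icc hL) (hQ.intervalIntegrable_of_Icc hL)]
    _ ≤ ∫ x in 0..L, (2 * (δ x * ‖deriv w x‖ ^ 2) + β * ‖q x‖ ^ 2) := by
        refine integral_mono_on hL
          (((hW.const_mul _).fun_add hQ).intervalIntegrable_of_Icc hL)
          ((((hδc.fun_mul hW).const_mul 2).fun_add hQ).intervalIntegrable_of_Icc hL) fun x hx ↦ ?_
        rw [mul_assoc]
        gcongr
        exact hδ₀ x hx
    _ ≤ l2Norm 0 L (phaseVector τ m p f₁ f₂ f₃ f₄) * l2Norm 0 L (phaseVector τ m p u w θ q) := by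
        rw [identity]
        exact (le_abs_self _).trans (abs_integral_inner_le hL
          (continuousOn_phaseVector hm hpc hf₁' hf₂.continuous hf₃.continuous hf₄.continuous)
          (continuousOn_phaseVector hm hpc hu₁ hw.continuous hθ.continuous hq.continuous))
    _ = √(normFsq L τ m p f₁ f₂ f₃ f₄) * √(normUsq L τ m p u w θ q) := by
        rw [l2Norm_phaseVector hm hpc hu₁ hw.continuous hθ.continuous hq.continuous hL hτ hm₀ hp₀,
          l2Norm_phaseVector hm hpc hf₁' hf₂.continuous hf₃.continuous hf₄.continuous hL hτ hm₀
            hp₀]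
        rfl

end Dissipation

section Temperature

variable (h : ResolventSol L η β κ τ m δ p lam f₁ f₂ f₃ f₄ u w θ q)

include h

lemma temperature_primitive_eq {x : ℝ} (hx : x ∈ Icc 0 L) :
    I * lam * (∫ y in 0..x, θ y) + (κ * q x + η * w x) = ∫ y in 0..x, f₃ y := by
  have temperature {y : ℝ} (hy : y ∈ Ioo 0 x) := h.temperature_eq ⟨hy.1, hy.2.trans_le hx.2⟩
  obtain ⟨-, hw, hθ, hq, -, -, hf₃, -, -, -, -, hw0, -, hq0, -⟩ := h
  have hasDerivAt_flux (y : ℝ) : HasDerivAt (fun y ↦ (κ : ℂ) * q y + η * w y)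
      (κ * deriv q y + η * deriv w y) y :=
    ((hq.differentiable (by simp) y).hasDerivAt.const_mul _).fun_add
      ((hw.differentiable (by simp) y).hasDerivAt.const_mul _)
  have ftc : ∫ y in 0..x, (f₃ y - I * lam * θ y) = κ * q x + η * w x := by
    rw [integral_eq_sub_of_hasDerivAt_of_le hx.1 (f := fun y ↦ (κ : ℂ) * q y + η * w y)
      (fun y _ ↦ (hasDerivAt_flux y).continuousAt.continuousWithinAt) fun y hy ↦ ?_]
    · simp [hw0, hq0]
    · exact (hf₃.continuous.sub (hθ.continuous.const_mul _)).intervalIntegrable ..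
    · rw [← temperature hy, add_sub_cancel_left]
      exact hasDerivAt_flux y
  rw [← ftc, intervalIntegral.integral_sub (hf₃.continuous.intervalIntegrable ..)
    ((hθ.continuous.const_mul _).intervalIntegrable ..), intervalIntegral.integral_const_mul,
    add_sub_cancel]

lemma mul_inner_deriv_temperature_primitive {x : ℝ} (hx : x ∈ Ioo 0 L) :
    κ * inner ℝ (deriv θ x) (∫ y in 0..x, θ y) =
      τ * inner ℝ (f₄ x) (∫ y in 0..x, θ y) - β * inner ℝ (q x) (∫ y in 0..x, θ y)
        + τ * inner ℝ (q x) (∫ y in 0..x, f₃ y) - τ * κ * ‖q x‖ ^ 2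
        - τ * η * inner ℝ (q x) (w x) := by
  have primitive := h.temperature_primitive_eq (Ioo_subset_Icc_self hx)
  obtain ⟨-, -, -, -, -, -, -, -, heq, -⟩ := h
  have heatFlux := (heq x hx).2.2.2
  generalize ∫ y in 0..x, θ y = Φ at primitive ⊢
  generalize ∫ y in 0..x, f₃ y = P at primitive ⊢
  simp only [Complex.ext_iff, add_re, mul_re, add_im, mul_im, I_re, I_im, ofReal_re,
    ofReal_im] at primitive heatFlux
  simp only [Complex.inner, Complex.sq_norm, normSq_apply, conj_re, conj_im, mul_re]
  linear_combination Φ.re * heatFlux.1 + Φ.im * heatFlux.2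
    + τ * (q x).re * primitive.1 + τ * (q x).im * primitive.2

lemma mul_integral_norm_temperature_sq (hL : 0 ≤ L) (hmean : ∫ x in 0..L, θ x = 0) :
    κ * ∫ x in 0..L, ‖θ x‖ ^ 2 =
      β * (∫ x in 0..L, inner ℝ (q x) (∫ y in 0..x, θ y))
        - τ * (∫ x in 0..L, inner ℝ (f₄ x) (∫ y in 0..x, θ y))
        - τ * (∫ x in 0..L, inner ℝ (q x) (∫ y in 0..x, f₃ y))
        + τ * κ * (∫ x in 0..L, ‖q x‖ ^ 2) + τ * η * ∫ x in 0..L, inner ℝ (q x) (w x) := by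
  have integrated := integral_congr_Ioo_of_le (μ := volume) hL fun _ hx ↦
    h.mul_inner_deriv_temperature_primitive hx
  obtain ⟨-, hw, hθ, hq, -, -, hf₃, hf₄, -⟩ := h
  have integrable_inner {f g : ℝ → ℂ} (hf : Continuous f) (hg : ContinuousOn g (Icc 0 L)) :
      IntervalIntegrable (fun x ↦ inner ℝ (f x) (g x)) volume 0 L :=
    (hf.continuousOn.inner (𝕜 := ℝ) hg).intervalIntegrable_of_Icc hL
  have hΦ := continuousOn_intervalIntegral hL hθ.continuous.continuousOn
  have i₁ := (integrable_inner hf₄.continuous hΦ).const_mul τ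
  have i₂ := (integrable_inner hq.continuous hΦ).const_mul β
  have i₃ := (integrable_inner hq.continuous
    (continuousOn_intervalIntegral hL hf₃.continuous.continuousOn)).const_mul τ
  have i₄ : IntervalIntegrable (fun x ↦ τ * κ * ‖q x‖ ^ 2) volume 0 L :=
    ((hq.continuous.norm.fun_pow 2).intervalIntegrable ..).const_mul _
  have i₅ := (integrable_inner hq.continuous hw.continuous.continuousOn).const_mul (τ * η)
  rw [intervalIntegral.integral_const_mul,
    integral_inner_deriv_primitive (hθ.of_le (by simp)) hmean,
    intervalIntegral.integral_sub (((i₁.sub i₂).add i₃).sub i₄) i₅,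
    intervalIntegral.integral_sub ((i₁.sub i₂).add i₃) i₄, integral_add (i₁.sub i₂) i₃,
    intervalIntegral.integral_sub i₁ i₂] at integrated
  simp only [intervalIntegral.integral_const_mul] at integrated
  linear_combination -integrated

lemma abs_mul_l2Norm_temperature_sq_le (hL : 0 ≤ L) (hβ : 0 ≤ β) (hτ : 0 ≤ τ)
    (hmean : ∫ x in 0..L, θ x = 0) :
    |κ| * l2Norm 0 L θ ^ 2 ≤
      β * (l2Norm 0 L q * (L * l2Norm 0 L θ)) + τ * (l2Norm 0 L f₄ * (L * l2Norm 0 L θ))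
        + τ * (l2Norm 0 L q * (L * l2Norm 0 L f₃)) + τ * |κ| * l2Norm 0 L q ^ 2
        + τ * |η| * (l2Norm 0 L q * (L * l2Norm 0 L (deriv w))) := by
  have identity := h.mul_integral_norm_temperature_sq hL hmean
  obtain ⟨-, hw, hθ, hq, -, -, hf₃, hf₄, -, -, -, hw0, -⟩ := h
  have inner_primitive_le {f g : ℝ → ℂ} (hf : Continuous f) (hg : Continuous g) :
      |∫ x in 0..L, inner ℝ (f x) (∫ y in 0..x, g y)| ≤
        l2Norm 0 L f * (L * l2Norm 0 L g) := by
    refine (abs_integral_inner_le hL hf.continuousOn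
      (continuousOn_intervalIntegral hL hg.continuousOn)).trans ?_
    gcongr
    · exact l2Norm_nonneg ..
    · simpa using l2Norm_primitive_le hL hg.continuousOn
  have inner_velocity_le : |∫ x in 0..L, inner ℝ (q x) (w x)| ≤
      l2Norm 0 L q * (L * l2Norm 0 L (deriv w)) := by
    refine (abs_integral_inner_le hL hq.continuous.continuousOn hw.continuous.continuousOn).trans ?_
    gcongr
    · exact l2Norm_nonneg ..
    · simpa using l2Norm_le_mul_l2Norm_deriv hL (hw.of_le (by simp)) hw0
  calc |κ| * l2Norm 0 L θ ^ 2 = |κ * ∫ x in 0..L, ‖θ x‖ ^ 2| := by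
        rw [← sq_l2Norm hL, abs_mul, abs_of_nonneg (sq_nonneg (l2Norm 0 L θ))]
    _ ≤ β * |∫ x in 0..L, inner ℝ (q x) (∫ y in 0..x, θ y)|
        + τ * |∫ x in 0..L, inner ℝ (f₄ x) (∫ y in 0..x, θ y)|
        + τ * |∫ x in 0..L, inner ℝ (q x) (∫ y in 0..x, f₃ y)|
        + τ * |κ| * l2Norm 0 L q ^ 2 + τ * |η| * |∫ x in 0..L, inner ℝ (q x) (w x)| := by
        rw [identity, ← sq_l2Norm hL]
        refine (abs_add_le _ _).trans (add_le_add ((abs_add_le _ _).trans (add_le_add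
          ((abs_sub _ _).trans (add_le_add ((abs_sub _ _).trans (add_le_add ?_ ?_)) ?_)) ?_)) ?_)
        <;> simp [abs_mul, abs_of_nonneg, hβ, hτ]
    _ ≤ _ := by
        gcongr
        · exact inner_primitive_le hq.continuous hθ.continuous
        · exact inner_primitive_le hf₄.continuous hθ.continuous
        · exact inner_primitive_le hq.continuous hf₃.continuous

lemma abs_mul_l2Norm_temperature_sq_le_sqrt_mul_sqrt (hL : 0 ≤ L) (hβ : 0 ≤ β) (hτ : 0 ≤ τ)
    (hm : ContinuousOn m (Icc 0 L)) (hp : ContinuousOn p (Icc 0 L))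
    (hm₀ : ∀ x ∈ Icc 0 L, 0 ≤ m x) (hp₀ : ∀ x ∈ Icc 0 L, 0 ≤ p x)
    (hmean : ∫ x in 0..L, θ x = 0) :
    |κ| * l2Norm 0 L θ ^ 2 ≤
      2 * √τ * L * (√(normFsq L τ m p f₁ f₂ f₃ f₄) * √(normUsq L τ m p u w θ q))
        + β * L * (l2Norm 0 L q * l2Norm 0 L θ) + τ * |κ| * l2Norm 0 L q ^ 2
        + τ * |η| * L * (l2Norm 0 L q * l2Norm 0 L (deriv w)) := by
  have bound := h.abs_mul_l2Norm_temperature_sq_le hL hβ hτ hmean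
  obtain ⟨hu, hw, hθ, hq, hf₁, hf₂, hf₃, hf₄, -⟩ := h
  have data₃ : l2Norm 0 L f₃ ≤ √(normFsq L τ m p f₁ f₂ f₃ f₄) := l2Norm_le_sqrt_normUsq hm hp
    (hf₁.of_le (by simp)) hf₂.continuous hf₃.continuous hf₄.continuous hL hτ hm₀ hp₀
  have data₄ : √τ * l2Norm 0 L f₄ ≤ √(normFsq L τ m p f₁ f₂ f₃ f₄) :=
    sqrt_mul_l2Norm_le_sqrt_normUsq hm hp (hf₁.of_le (by simp)) hf₂.continuous hf₃.continuous
      hf₄.continuous hL hτ hm₀ hp₀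
  have temperature : l2Norm 0 L θ ≤ √(normUsq L τ m p u w θ q) := l2Norm_le_sqrt_normUsq hm hp
    (hu.of_le (by simp)) hw.continuous hθ.continuous hq.continuous hL hτ hm₀ hp₀
  have heatFlux : √τ * l2Norm 0 L q ≤ √(normUsq L τ m p u w θ q) := sqrt_mul_l2Norm_le_sqrt_normUsq
    hm hp (hu.of_le (by simp)) hw.continuous hθ.continuous hq.continuous hL hτ hm₀ hp₀
  have data₃_heatFlux := mul_le_mul data₃ heatFlux
    (mul_nonneg (Real.sqrt_nonneg _) (l2Norm_nonneg ..)) (Real.sqrt_nonneg _)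
  have data₄_temperature := mul_le_mul data₄ temperature (l2Norm_nonneg ..) (Real.sqrt_nonneg _)
  have data_terms := mul_le_mul_of_nonneg_left (add_le_add data₃_heatFlux data₄_temperature)
    (mul_nonneg τ.sqrt_nonneg hL)
  linear_combination bound + data_terms - L * (l2Norm 0 L f₃ * l2Norm 0 L q
    + l2Norm 0 L f₄ * l2Norm 0 L θ) * Real.mul_self_sqrt hτ

end Temperature

end ResolventSol

theorem resolvent_estimate_theta_general
    (L η β κ τ : ℝ) (hL : 0 < L) (hβ : 0 < β) (hκ : κ ≠ 0) (hτ : 0 ≤ τ) (m δ p : ℝ → ℝ)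
    (hm : ContinuousOn m (Icc 0 L))
    (hδ : AbsolutelyContinuousOnInterval δ 0 L)
    (hp : AbsolutelyContinuousOnInterval p 0 L)
    (hm₀ : ∀ x ∈ Icc 0 L, 0 ≤ m x)
    (hδpos : ∀ x ∈ Icc 0 L, 0 < δ x)
    (hp₀ : ∀ x ∈ Icc 0 L, 0 ≤ p x) :
    ∃ C > (0 : ℝ),
      ∀ (lam : ℝ) (f₁ f₂ f₃ f₄ u w θ q : ℝ → ℂ),
        ResolventSol L η β κ τ m δ p lam f₁ f₂ f₃ f₄ u w θ q →
          (∫ x in (0 : ℝ)..L, θ x) = 0 →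
            (∫ x in (0 : ℝ)..L, ‖θ x‖ ^ 2)
              ≤ C * √(normFsq L τ m p f₁ f₂ f₃ f₄) * √(normUsq L τ m p u w θ q) := by
  obtain ⟨δ₀, hδ₀pos, hδ₀⟩ : ∃ δ₀ > 0, ∀ x ∈ Icc 0 L, δ₀ ≤ δ x :=
    isCompact_Icc.exists_forall_le' (uIcc_of_le hL.le ▸ hδ.continuousOn) hδpos
  have hκ' : 0 < |κ| := abs_pos.2 hκ
  refine ⟨2 / |κ| * (2 * √τ * L + (β * L) ^ 2 / (2 * |κ|) / β + τ * |κ| / β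
    + τ * |η| * L / 2 * (1 / β + 1 / (2 * δ₀))), by positivity,
    fun lam f₁ f₂ f₃ f₄ u w θ q h hmean ↦ ?_⟩
  have dissipation := h.dissipation_le hL.le hτ hδ hp hm hm₀ hp₀ hδ₀
  have temperature := h.abs_mul_l2Norm_temperature_sq_le_sqrt_mul_sqrt hL.le hβ.le hτ hm
    (uIcc_of_le hL.le ▸ hp.continuousOn) hm₀ hp₀ hmean
  have heatFlux_nonneg : 0 ≤ β * l2Norm 0 L q ^ 2 := by positivity
  have velocity_nonneg : 0 ≤ 2 * δ₀ * l2Norm 0 L (deriv w) ^ 2 := by positivity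
  rw [← sq_l2Norm hL.le, mul_assoc]
  exact sq_le_mul_of_mul_sq_le hκ' hβ (by positivity) (by positivity) (by positivity) temperature
    (by linarith) (by linarith)

theorem resolvent_estimate_theta
    (L η β κ τ : ℝ) (hL : 0 < L) (hη : 0 < η) (hβ : 0 < β) (hκ : 0 < κ) (hτ : 0 < τ)
    (m δ p : ℝ → ℝ)
    (hmLip : ∃ K, LipschitzOnWith K m (Icc 0 L))
    (hδLip : ∃ K, LipschitzOnWith K δ (Icc 0 L))
    (hpLip : ∃ K, LipschitzOnWith K p (Icc 0 L))
    (hmpos : ∀ x ∈ Icc (0 : ℝ) L, 0 < m x)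
    (hδpos : ∀ x ∈ Icc (0 : ℝ) L, 0 < δ x)
    (hppos : ∀ x ∈ Icc (0 : ℝ) L, 0 < p x)
    :
    ∃ C > (0 : ℝ),
      ∀ (lam : ℝ) (f₁ f₂ f₃ f₄ u w θ q : ℝ → ℂ),
        ResolventSol L η β κ τ m δ p lam f₁ f₂ f₃ f₄ u w θ q →
          (∫ x in (0 : ℝ)..L, θ x) = 0 →
            (∫ x in (0 : ℝ)..L, ‖θ x‖ ^ 2)
              ≤ C * Real.sqrt (normFsq L τ m p f₁ f₂ f₃ f₄)
                * Real.sqrt (normUsq L τ m p u w θ q) := by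
  obtain ⟨_, hm⟩ := hmLip
  rw [← uIcc_of_le hL.le] at hδLip hpLip
  exact resolvent_estimate_theta_general L η β κ τ hL hβ hκ.ne' hτ.le m δ p hm.continuousOn
    hδLip.choose_spec.absolutelyContinuousOnInterval
    hpLip.choose_spec.absolutelyContinuousOnInterval
    (fun x hx ↦ (hmpos x hx).le) hδpos (fun x hx ↦ (hppos x hx).le)
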